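/- arXiv:1405.7197 — 2 statements merged into one kernel-verified Lean document; each statement's English description precedes it below -/
import Mathlib

section
/- Let r ≥ 2 be an integer and let ε, α, β be reals with 0 ≤ α < ε < 1 and 0 < β < 1. If the positive integer N satisfies N ≥ ((2+α)ε/(ε−α)²)·[(r−1)·ln(2ε(2+α)(r−1)/(ε−α)²) + ln(1/β)] + (r−1)/2, then the binomial condition C(⌊αN⌋+r−1, ⌊αN⌋) · Σ_{i=0}^{⌊αN⌋+r−1} C(N,i) ε^i (1−ε)^{N−i} ≤ β holds, where ⌊·⌋ denotes the integer part and C(n,k) the binomial coefficient. -/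
lemma aux_choose (k d : ℕ) : Nat.choose (k + d) d ≤ (k + 1) ^ d := by
  induction d with
  | zero => simp
  | succ d ih =>
    have h := Nat.add_one_mul_choose_eq (k + d) d
    have h2 : k + d + 1 ≤ (k + 1) * (d + 1) := by nlinarith [Nat.zero_le (k * d)]
    have h3 : Nat.choose (k + d + 1) (d + 1) * (d + 1) ≤ (k + 1) ^ (d + 1) * (d + 1) := by
      rw [← h]
      calc (k + d + 1) * Nat.choose (k + d) d ≤ ((k + 1) * (d + 1)) * (k + 1) ^ d :=
            Nat.mul_le_mul h2 ih
        _ = _ := by ring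
    exact Nat.le_of_mul_le_mul_right h3 (Nat.succ_pos d)

lemma aux_exp (t : ℝ) (ht : 0 ≤ t) : Real.exp (-t) ≤ 1 - t + t ^ 2 / 2 := by
  have h := Real.quadratic_le_exp_of_nonneg ht
  have hp : 0 < 1 - t + t ^ 2 / 2 := by nlinarith [sq_nonneg (t - 1)]
  rw [Real.exp_neg, inv_le_comm₀ (Real.exp_pos t) hp]
  refine le_trans ?_ h
  rw [inv_le_iff_one_le_mul₀ hp]
  nlinarith [sq_nonneg (t ^ 2)]

lemma aux_tail (N m : ℕ) (ε t : ℝ) (h0 : 0 ≤ ε) (h1 : ε ≤ 1) (ht : 0 ≤ t) :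
    ∑ i ∈ Finset.range (m + 1), (Nat.choose N i : ℝ) * ε ^ i * (1 - ε) ^ (N - i) ≤
      Real.exp (t * m - N * ε * t + N * ε * t ^ 2 / 2) := by
  have h1' : 0 ≤ 1 - ε := by linarith
  set g : ℕ → ℝ := fun i => Real.exp (t * m) *
    ((Nat.choose N i : ℝ) * (ε * Real.exp (-t)) ^ i * (1 - ε) ^ (N - i)) with hg
  have hg0 : ∀ i, 0 ≤ g i := fun i => by simp only [hg]; positivity
  have s1 : ∑ i ∈ Finset.range (m + 1), (Nat.choose N i : ℝ) * ε ^ i * (1 - ε) ^ (N - i) ≤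
      ∑ i ∈ Finset.range (m + 1), g i := by
    apply Finset.sum_le_sum
    intro i hi
    have him : (i : ℝ) ≤ m := by
      have := Finset.mem_range.1 hi
      exact_mod_cast (by omega : i ≤ m)
    have e : g i = ((Nat.choose N i : ℝ) * ε ^ i * (1 - ε) ^ (N - i)) *
        Real.exp (t * (m - i)) := by
      have : Real.exp (t * (m - i)) = Real.exp (t * m) * Real.exp (-t) ^ i := by
        rw [← Real.exp_nat_mul, ← Real.exp_add]; congr 1; ring
      rw [this]; simp only [hg, mul_pow]; ring
    rw [e]
    apply le_mul_of_one_le_right (by positivity)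
    apply Real.one_le_exp
    exact mul_nonneg ht (by linarith)
  have s2 : ∑ i ∈ Finset.range (m + 1), g i ≤ ∑ i ∈ Finset.range (N + 1 + m), g i :=
    Finset.sum_le_sum_of_subset_of_nonneg (Finset.range_mono (by omega)) (fun i _ _ => hg0 i)
  have s3 : ∑ i ∈ Finset.range (N + 1), g i = ∑ i ∈ Finset.range (N + 1 + m), g i := by
    apply Finset.sum_subset (Finset.range_mono (by omega))
    intro i _ hi
    have : N < i := by
      rw [Finset.mem_range] at hi; omega
    simp [hg, Nat.choose_eq_zero_of_lt this]
  have s4 : ∑ i ∈ Finset.range (N + 1), g i =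
      Real.exp (t * m) * (ε * Real.exp (-t) + (1 - ε)) ^ N := by
    rw [add_pow, Finset.mul_sum]
    apply Finset.sum_congr rfl
    intro i _
    simp only [hg]; ring
  have s5 : (ε * Real.exp (-t) + (1 - ε)) ^ N ≤ Real.exp (- N * ε * t + N * ε * t ^ 2 / 2) := by
    have : ε * Real.exp (-t) + (1 - ε) ≤ Real.exp (ε * (-t + t ^ 2 / 2)) := by
      have a := mul_le_mul_of_nonneg_left (aux_exp t ht) h0
      have b := Real.add_one_le_exp (ε * (-t + t ^ 2 / 2))
      nlinarith
    calc _ ≤ Real.exp (ε * (-t + t ^ 2 / 2)) ^ N := by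
          apply pow_le_pow_left₀ _ this
          positivity
      _ = _ := by rw [← Real.exp_nat_mul]; congr 1; ring
  calc _ ≤ Real.exp (t * m) * (ε * Real.exp (-t) + (1 - ε)) ^ N := by linarith
    _ ≤ Real.exp (t * m) * Real.exp (- N * ε * t + N * ε * t ^ 2 / 2) := by gcongr
    _ = _ := by rw [← Real.exp_add]; congr 1; ring

/-- Corollary 1 (arithmetic core): the explicit sample-size bound implies the
implicit binomial condition of Theorem 1. -/
theorem stmt_0 (r N : ℕ) (ε α β : ℝ)
    (hr : 2 ≤ r) (hN : 0 < N)
    (hα : 0 ≤ α) (hαε : α < ε) (hε1 : ε < 1)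
    (hβ0 : 0 < β) (hβ1 : β < 1)
    (hNbound : (N : ℝ) ≥ ((2 + α) * ε / (ε - α) ^ 2) *
      (((r : ℝ) - 1) * Real.log (2 * ε * (2 + α) * ((r : ℝ) - 1) / (ε - α) ^ 2) +
        Real.log (1 / β)) + ((r : ℝ) - 1) / 2) :
    (Nat.choose (⌊α * (N : ℝ)⌋₊ + r - 1) ⌊α * (N : ℝ)⌋₊ : ℝ) *
      ∑ i ∈ Finset.range (⌊α * (N : ℝ)⌋₊ + r),
        (Nat.choose N i : ℝ) * ε ^ i * (1 - ε) ^ (N - i) ≤ β := by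
  obtain ⟨d, rfl⟩ : ∃ d, r = d + 1 := ⟨r - 1, by omega⟩
  have hd : (1 : ℝ) ≤ d := by exact_mod_cast (by omega : 1 ≤ d)
  have hkN : (⌊α * (N : ℝ)⌋₊ : ℝ) ≤ α * N := Nat.floor_le (by positivity)
  set k := ⌊α * (N : ℝ)⌋₊ with hk
  have hε0 : 0 < ε := by linarith
  have hs : 0 < ε - α := by linarith
  set A : ℝ := (2 + α) * ε / (ε - α) ^ 2 with hA
  have hA0 : 0 < A := by positivity
  have e1 : 2 * ε * (2 + α) * (((d + 1 : ℕ) : ℝ) - 1) / (ε - α) ^ 2 = 2 * A * d := by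
    rw [hA]; push_cast; ring
  rw [e1] at hNbound
  push_cast at hNbound
  rw [one_div, Real.log_inv, add_sub_cancel_right] at hNbound
  have hc : 0 < 2 * A * d := by positivity
  -- binomial coefficient
  have c1 : (Nat.choose (k + (d + 1) - 1) k : ℝ) ≤
      Real.exp ((α * N + 1) / (2 * A) + d * Real.log (2 * A * d) - d) := by
    have a : Nat.choose (k + (d + 1) - 1) k = Nat.choose (k + d) d := by
      rw [← add_assoc, Nat.add_sub_cancel, Nat.choose_symm_add]
    have b : (Nat.choose (k + d) d : ℝ) ≤ ((k : ℝ) + 1) ^ d := by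
      exact_mod_cast aux_choose k d
    have y0 : (0 : ℝ) < α * N + 1 := by positivity
    have l : Real.log (α * N + 1) ≤
        (α * N + 1) / (2 * A * d) + Real.log (2 * A * d) - 1 := by
      have := Real.log_le_sub_one_of_pos (div_pos y0 hc)
      rw [Real.log_div y0.ne' hc.ne'] at this
      linarith
    rw [a]
    calc _ ≤ ((k : ℝ) + 1) ^ d := b
      _ ≤ (α * N + 1) ^ d := by gcongr
      _ = Real.exp (d * Real.log (α * N + 1)) := by
          rw [Real.exp_nat_mul, Real.exp_log y0]
      _ ≤ Real.exp (d * ((α * N + 1) / (2 * A * d) + Real.log (2 * A * d) - 1)) := by gcongr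
      _ = _ := by congr 1; field_simp
  have c2 := aux_tail N (k + d) ε ((ε - α) / ε) hε0.le hε1.le (by positivity)
  have t1 : (ε - α) / ε ≤ 1 := by rw [div_le_one hε0]; linarith
  have t0 : 0 ≤ (ε - α) / ε := by positivity
  have key : (N : ℝ) / A ≥ d * Real.log (2 * A * d) - Real.log β + d / (2 * A) := by
    rw [ge_iff_le, le_div_iff₀ hA0]
    have : (d : ℝ) / (2 * A) * A = d / 2 := by field_simp
    nlinarith
  have ex : (ε - α) / ε * ((k + d : ℕ) : ℝ) - N * ε * ((ε - α) / ε)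
      + N * ε * ((ε - α) / ε) ^ 2 / 2 ≤ d - (2 + α) / 2 * (N / A) := by
    have f : (2 + α) / 2 * (N / A) = N * (ε - α) ^ 2 / (2 * ε) := by
      rw [hA]; field_simp
    have f2 : (ε - α) / ε * (α * N) - N * ε * ((ε - α) / ε)
      + N * ε * ((ε - α) / ε) ^ 2 / 2 = - (N * (ε - α) ^ 2 / (2 * ε)) := by
      field_simp; ring
    have f3 := mul_le_mul_of_nonneg_left hkN t0
    have f4 : (ε - α) / ε * d ≤ d := mul_le_of_le_one_left (by positivity) t1
    push_cast
    rw [f]; linarith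
  calc _ ≤ Real.exp ((α * N + 1) / (2 * A) + d * Real.log (2 * A * d) - d) *
        Real.exp (d - (2 + α) / 2 * (N / A)) := by
        apply mul_le_mul c1 (c2.trans (Real.exp_le_exp.2 ex)) _ (Real.exp_pos _).le
        have : 0 ≤ 1 - ε := by linarith
        positivity
    _ ≤ Real.exp (Real.log β) := by
        rw [← Real.exp_add]
        apply Real.exp_le_exp.2
        have g1 : (α * N + 1) / (2 * A) = α / 2 * (N / A) + 1 / (2 * A) := by
          field_simp
        have g2 : 1 / (2 * A) ≤ d / (2 * A) := by gcongr
        rw [g1]; linarith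
    _ = β := Real.exp_log hβ0
end

section
/- Let r ≥ 2 be an integer, ε, α, β reals with 0 ≤ α < ε < 1 and 0 < β < 1, and let N > 0 be a real number. If N ≥ 2(r−1)/(ε−α) + (2ε/(ε−α)²)·ln(1/β) + (2ε(r−1)/(ε−α)²)·ln(αN + r−1), then (αN+r−1)^{r−1} · exp(−((ε−α)N−(r−1))²/(2εN)) ≤ β. -/
/-- Rearrangement and exponentiation steps in the chain of implications
proving Corollary 1. -/
theorem stmt_6 (r : ℕ) (hr : 2 ≤ r) (ε α β N : ℝ)
    (hα : 0 ≤ α) (hαε : α < ε) (hε1 : ε < 1)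
    (hβ0 : 0 < β) (hβ1 : β < 1) (hN : 0 < N)
    (h : N ≥ 2 * ((r : ℝ) - 1) / (ε - α) + (2 * ε / (ε - α) ^ 2) * Real.log (1 / β) +
      (2 * ε * ((r : ℝ) - 1) / (ε - α) ^ 2) * Real.log (α * N + (r : ℝ) - 1)) :
    (α * N + (r : ℝ) - 1) ^ (r - 1) *
      Real.exp (-((ε - α) * N - ((r : ℝ) - 1)) ^ 2 / (2 * ε * N)) ≤ β := by
  have hr' : (2 : ℝ) ≤ (r : ℝ) := by exact_mod_cast hr
  have hd : 0 < ε - α := by linarith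
  have hε : 0 < ε := by linarith
  have hcast : ((r - 1 : ℕ) : ℝ) = (r : ℝ) - 1 := by
    rw [Nat.cast_sub (by omega)]; simp
  have hA : 0 < α * N + (r : ℝ) - 1 := by
    have := mul_nonneg hα hN.le
    linarith
  rw [one_div, Real.log_inv] at h
  have hpow : (α * N + (r : ℝ) - 1) ^ (r - 1) =
      Real.exp (((r : ℝ) - 1) * Real.log (α * N + (r : ℝ) - 1)) := by
    rw [← hcast, Real.exp_nat_mul, Real.exp_log hA]
  rw [hpow, ← Real.exp_add]
  refine le_trans (Real.exp_le_exp.mpr ?_) (Real.exp_log hβ0).le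
  generalize Real.log (α * N + (r : ℝ) - 1) = M at *
  generalize Real.log β = L at *
  generalize (r : ℝ) - 1 = k at *
  generalize ε - α = d at *
  have h2 : 2 * k * d - 2 * ε * L + 2 * ε * k * M ≤ N * d ^ 2 := by
    have h3 := mul_le_mul_of_nonneg_right h (sq_nonneg d)
    have e : (2 * k / d + 2 * ε / d ^ 2 * -L + 2 * ε * k / d ^ 2 * M) * d ^ 2 =
        2 * k * d - 2 * ε * L + 2 * ε * k * M := by
      field_simp
      ring
    linarith
  have hden : 0 < 2 * ε * N := by positivity
  have h5 : -(d * N - k) ^ 2 / (2 * ε * N) ≤ L - k * M := by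
    rw [div_le_iff₀ hden]
    nlinarith [mul_le_mul_of_nonneg_right h2 hN.le, sq_nonneg k]
  linarith
end
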